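/- For all n, k ∈ ℕ, the rules of Str(DS) — label substitution, weakening, contraction of relational and deontic atoms and of labelled formulae, and cut — are admissible in DS_n^k L: every labelled sequent derivable in DS_n^k L + Str(DS) is derivable in DS_n^k L. -/

import Mathlib

/-!
Labelled sequent calculi for deontic STIT logics `DS_n^k`.
-/

namespace DeonticStit

/-- Deontic STIT formulae in negation normal form, with agents in `Fin (n+1)`:
literals `p`, `p̄` and the connectives `∨`, `∧`, `□`, `◇`, `[i]`, `⟨i⟩`,
`⊗_i`, `⊖_i`. -/
inductive SFml (n : ℕ) : Type
  | pos : ℕ → SFml n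
  | neg : ℕ → SFml n
  | or  : SFml n → SFml n → SFml n
  | and : SFml n → SFml n → SFml n
  | box : SFml n → SFml n
  | dia : SFml n → SFml n
  | abox : Fin (n + 1) → SFml n → SFml n
  | adia : Fin (n + 1) → SFml n → SFml n
  | obl : Fin (n + 1) → SFml n → SFml n
  | per : Fin (n + 1) → SFml n → SFml n

/-- Multisets of relational atoms `R_[i] w u`. -/
abbrev RAt (n : ℕ) : Type := Multiset (Fin (n + 1) × ℕ × ℕ)

/-- Multisets of deontic atoms `I_{⊗_i} u`. -/
abbrev DAt (n : ℕ) : Type := Multiset (Fin (n + 1) × ℕ)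

/-- Multisets of labelled formulae `w : φ`. -/
abbrev SSeq (n : ℕ) : Type := Multiset (ℕ × SFml n)

/-- The label `v` occurs in the labelled sequent `RA, IA ⊢ Γ`. -/
def soccurs {n : ℕ} (v : ℕ) (RA : RAt n) (IA : DAt n) (Γ : SSeq n) : Prop :=
  (∃ i w u, (i, w, u) ∈ RA ∧ (v = w ∨ v = u)) ∨ (∃ i, (i, v) ∈ IA) ∨ ∃ φ, (v, φ) ∈ Γ

/-- Undirected `i`-paths: `IPath RA i w u` holds iff `w = u` or there is a
sequence of atoms, each of the form `R_[i] v z` or `R_[i] z v`, linking `w`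
to `u`. -/
inductive IPath {n : ℕ} (RA : RAt n) (i : Fin (n + 1)) : ℕ → ℕ → Prop
  | refl (w : ℕ) : IPath RA i w w
  | fwd {w u v : ℕ} : (i, w, u) ∈ RA → IPath RA i u v → IPath RA i w v
  | bwd {w u v : ℕ} : (i, u, w) ∈ RA → IPath RA i u v → IPath RA i w v

/-- The negation-normal-form negation `φ̄` of a deontic STIT formula. -/
def SFml.negnnf {n : ℕ} : SFml n → SFml n
  | SFml.pos p => SFml.neg p
  | SFml.neg p => SFml.pos p
  | SFml.or φ ψ => SFml.and φ.negnnf ψ.negnnf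
  | SFml.and φ ψ => SFml.or φ.negnnf ψ.negnnf
  | SFml.box φ => SFml.dia φ.negnnf
  | SFml.dia φ => SFml.box φ.negnnf
  | SFml.abox i φ => SFml.adia i φ.negnnf
  | SFml.adia i φ => SFml.abox i φ.negnnf
  | SFml.obl i φ => SFml.per i φ.negnnf
  | SFml.per i φ => SFml.obl i φ.negnnf

/-- Substitution of the label `w` for the label `u`. -/
def substLbl (w u v : ℕ) : ℕ := if v = u then w else v

/-- Label substitution on relational atoms. -/
def substRAt {n : ℕ} (w u : ℕ) (RA : RAt n) : RAt n :=
  RA.map fun t => (t.1, substLbl w u t.2.1, substLbl w u t.2.2)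

/-- Label substitution on deontic atoms. -/
def substDAt {n : ℕ} (w u : ℕ) (IA : DAt n) : DAt n :=
  IA.map fun t => (t.1, substLbl w u t.2)

/-- Label substitution on labelled formulae. -/
def substSSeq {n : ℕ} (w u : ℕ) (Γ : SSeq n) : SSeq n :=
  Γ.map fun t => (substLbl w u t.1, t.2)

/-- Gated labelled sequent calculi for deontic STIT logics.  The rules `(id)`,
`(∨r)`, `(∧r)`, `(◇)`, `(□)`, `([i])`, `(⊗_i)`, `(IOA)` and (for `k > 0`)
`(APC_i^k)` are always present; the propagation rules `(Pr_⟨i⟩)`, `(Pr_⊖i¹)`,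
`(Pr_⊖i²)` are present exactly when the gate `gR` holds; the rules `(⟨i⟩)`,
`(⊖_i)` and the structural rules `(ref_i)`, `(euc_i)`, `(D2^i)`, `(D3^i)` are
present exactly when the gate `gG` holds; and the rules of `Str(DS)` (label
substitution, weakening, contractions, cut) are present exactly when the gate
`gS` holds.  In particular `SDer n k False True False` is `G3DS_n^k`,
`SDer n k True False False` is `DS_n^k L`, and `SDer n k True False True` is
`DS_n^k L + Str(DS)`. -/
inductive SDer (n k : ℕ) (gR gG gS : Prop) : RAt n → DAt n → SSeq n → Prop
  | id (RA : RAt n) (IA : DAt n) (Γ : SSeq n) (w p : ℕ) :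
      SDer n k gR gG gS RA IA ((w, SFml.pos p) ::ₘ (w, SFml.neg p) ::ₘ Γ)
  | orr {RA : RAt n} {IA : DAt n} {Γ : SSeq n} {w : ℕ} {φ ψ : SFml n} :
      SDer n k gR gG gS RA IA ((w, φ) ::ₘ (w, ψ) ::ₘ Γ) →
      SDer n k gR gG gS RA IA ((w, SFml.or φ ψ) ::ₘ Γ)
  | andr {RA : RAt n} {IA : DAt n} {Γ : SSeq n} {w : ℕ} {φ ψ : SFml n} :
      SDer n k gR gG gS RA IA ((w, φ) ::ₘ Γ) →
      SDer n k gR gG gS RA IA ((w, ψ) ::ₘ Γ) →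
      SDer n k gR gG gS RA IA ((w, SFml.and φ ψ) ::ₘ Γ)
  | diar {RA : RAt n} {IA : DAt n} {Γ : SSeq n} {w u : ℕ} {φ : SFml n} :
      SDer n k gR gG gS RA IA ((w, SFml.dia φ) ::ₘ (u, φ) ::ₘ Γ) →
      SDer n k gR gG gS RA IA ((w, SFml.dia φ) ::ₘ Γ)
  | boxr {RA : RAt n} {IA : DAt n} {Γ : SSeq n} {w u : ℕ} {φ : SFml n} :
      ¬ soccurs u RA IA ((w, SFml.box φ) ::ₘ Γ) →
      SDer n k gR gG gS RA IA ((u, φ) ::ₘ Γ) →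
      SDer n k gR gG gS RA IA ((w, SFml.box φ) ::ₘ Γ)
  | aboxr {RA : RAt n} {IA : DAt n} {Γ : SSeq n} {w u : ℕ} {i : Fin (n + 1)}
      {φ : SFml n} :
      ¬ soccurs u RA IA ((w, SFml.abox i φ) ::ₘ Γ) →
      SDer n k gR gG gS ((i, w, u) ::ₘ RA) IA ((u, φ) ::ₘ Γ) →
      SDer n k gR gG gS RA IA ((w, SFml.abox i φ) ::ₘ Γ)
  | oblr {RA : RAt n} {IA : DAt n} {Γ : SSeq n} {w u : ℕ} {i : Fin (n + 1)}
      {φ : SFml n} :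
      ¬ soccurs u RA IA ((w, SFml.obl i φ) ::ₘ Γ) →
      SDer n k gR gG gS RA ((i, u) ::ₘ IA) ((u, φ) ::ₘ Γ) →
      SDer n k gR gG gS RA IA ((w, SFml.obl i φ) ::ₘ Γ)
  | ioa {RA : RAt n} {IA : DAt n} {Γ : SSeq n} (ws : Fin (n + 1) → ℕ) (u : ℕ) :
      ¬ soccurs u RA IA Γ →
      SDer n k gR gG gS ((Finset.univ.val.map fun i => (i, ws i, u)) + RA) IA Γ →
      SDer n k gR gG gS RA IA Γ
  | apc {RA : RAt n} {IA : DAt n} {Γ : SSeq n} (hk : 0 < k) (i : Fin (n + 1))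
      (ws : Fin (k + 1) → ℕ) :
      (∀ m j : Fin (k + 1), (m : ℕ) < (j : ℕ) →
        SDer n k gR gG gS ((i, ws m, ws j) ::ₘ RA) IA Γ) →
      SDer n k gR gG gS RA IA Γ
  | prAdia {RA : RAt n} {IA : DAt n} {Γ : SSeq n} {u v : ℕ} {i : Fin (n + 1)}
      {φ : SFml n} :
      gR → IPath RA i u v →
      SDer n k gR gG gS RA IA ((u, SFml.adia i φ) ::ₘ (v, φ) ::ₘ Γ) →
      SDer n k gR gG gS RA IA ((u, SFml.adia i φ) ::ₘ Γ)
  | prPer1 {RA : RAt n} {IA : DAt n} {Γ : SSeq n} {w u v : ℕ} {i : Fin (n + 1)}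
      {φ : SFml n} :
      gR → IPath RA i u v →
      SDer n k gR gG gS RA ((i, u) ::ₘ IA) ((w, SFml.per i φ) ::ₘ (v, φ) ::ₘ Γ) →
      SDer n k gR gG gS RA ((i, u) ::ₘ IA) ((w, SFml.per i φ) ::ₘ Γ)
  | prPer2 {RA : RAt n} {IA : DAt n} {Γ : SSeq n} {w u : ℕ} {i : Fin (n + 1)}
      {φ : SFml n} :
      gR → ¬ soccurs u RA IA ((w, SFml.per i φ) ::ₘ Γ) →
      SDer n k gR gG gS RA ((i, u) ::ₘ IA) ((w, SFml.per i φ) ::ₘ (u, φ) ::ₘ Γ) →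
      SDer n k gR gG gS RA IA ((w, SFml.per i φ) ::ₘ Γ)
  | adiar {RA : RAt n} {IA : DAt n} {Γ : SSeq n} {w u : ℕ} {i : Fin (n + 1)}
      {φ : SFml n} :
      gG →
      SDer n k gR gG gS ((i, w, u) ::ₘ RA) IA
        ((w, SFml.adia i φ) ::ₘ (u, φ) ::ₘ Γ) →
      SDer n k gR gG gS ((i, w, u) ::ₘ RA) IA ((w, SFml.adia i φ) ::ₘ Γ)
  | operr {RA : RAt n} {IA : DAt n} {Γ : SSeq n} {w u : ℕ} {i : Fin (n + 1)}
      {φ : SFml n} :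
      gG →
      SDer n k gR gG gS RA ((i, u) ::ₘ IA) ((w, SFml.per i φ) ::ₘ (u, φ) ::ₘ Γ) →
      SDer n k gR gG gS RA ((i, u) ::ₘ IA) ((w, SFml.per i φ) ::ₘ Γ)
  | refl {RA : RAt n} {IA : DAt n} {Γ : SSeq n} {w : ℕ} {i : Fin (n + 1)} :
      gG → SDer n k gR gG gS ((i, w, w) ::ₘ RA) IA Γ →
      SDer n k gR gG gS RA IA Γ
  | euc {RA : RAt n} {IA : DAt n} {Γ : SSeq n} {w u v : ℕ} {i : Fin (n + 1)} :
      gG →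
      SDer n k gR gG gS ((i, w, u) ::ₘ (i, w, v) ::ₘ (i, u, v) ::ₘ RA) IA Γ →
      SDer n k gR gG gS ((i, w, u) ::ₘ (i, w, v) ::ₘ RA) IA Γ
  | d2 {RA : RAt n} {IA : DAt n} {Γ : SSeq n} {u : ℕ} {i : Fin (n + 1)} :
      gG → ¬ soccurs u RA IA Γ →
      SDer n k gR gG gS RA ((i, u) ::ₘ IA) Γ →
      SDer n k gR gG gS RA IA Γ
  | d3 {RA : RAt n} {IA : DAt n} {Γ : SSeq n} {w u : ℕ} {i : Fin (n + 1)} :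
      gG →
      SDer n k gR gG gS ((i, w, u) ::ₘ RA) ((i, w) ::ₘ (i, u) ::ₘ IA) Γ →
      SDer n k gR gG gS ((i, w, u) ::ₘ RA) ((i, w) ::ₘ IA) Γ
  | subst {RA : RAt n} {IA : DAt n} {Γ : SSeq n} (w u : ℕ) :
      gS → SDer n k gR gG gS RA IA Γ →
      SDer n k gR gG gS (substRAt w u RA) (substDAt w u IA) (substSSeq w u Γ)
  | wk {RA RA' : RAt n} {IA IA' : DAt n} {Γ Γ' : SSeq n} :
      gS → SDer n k gR gG gS RA IA Γ →
      SDer n k gR gG gS (RA + RA') (IA + IA') (Γ + Γ')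
  | ctrR {RA : RAt n} {IA : DAt n} {Γ : SSeq n} (a : Fin (n + 1) × ℕ × ℕ) :
      gS → SDer n k gR gG gS (a ::ₘ a ::ₘ RA) IA Γ →
      SDer n k gR gG gS (a ::ₘ RA) IA Γ
  | ctrI {RA : RAt n} {IA : DAt n} {Γ : SSeq n} (b : Fin (n + 1) × ℕ) :
      gS → SDer n k gR gG gS RA (b ::ₘ b ::ₘ IA) Γ →
      SDer n k gR gG gS RA (b ::ₘ IA) Γ
  | ctrF {RA : RAt n} {IA : DAt n} {Γ : SSeq n} (w : ℕ) (φ : SFml n) :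
      gS → SDer n k gR gG gS RA IA ((w, φ) ::ₘ (w, φ) ::ₘ Γ) →
      SDer n k gR gG gS RA IA ((w, φ) ::ₘ Γ)
  | cut {RA : RAt n} {IA : DAt n} {Γ : SSeq n} (w : ℕ) (φ : SFml n) :
      gS → SDer n k gR gG gS RA IA ((w, φ) ::ₘ Γ) →
      SDer n k gR gG gS RA IA ((w, SFml.negnnf φ) ::ₘ Γ) →
      SDer n k gR gG gS RA IA Γ

/-- The labelled calculus `G3DS_n^k`. -/
abbrev G3DS (n k : ℕ) : RAt n → DAt n → SSeq n → Prop := SDer n k False True False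

/-- The refined labelled calculus `DS_n^k L`. -/
abbrev DSL (n k : ℕ) : RAt n → DAt n → SSeq n → Prop := SDer n k True False False

/-- The calculus `DS_n^k L + Str(DS)`. -/
abbrev DSLStr (n k : ℕ) : RAt n → DAt n → SSeq n → Prop := SDer n k True False True

/-! The labelled calculus with every rule is sound for deontic STIT models, cut included since a
formula and its negation are never both false. Conversely, an underivable sequent of `DS_n^k L` is
extended by backward applications of the rules, all intermediate sequents staying underivable.
A generic ideal of such extensions meets every demand the rules impose, and its limit is a model
in which the given sequent is false. So whatever is derivable with the structural rules, being
valid, is derivable without them. -/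

/-- Deontic STIT models: the frames of `DS_n^k` over a set `W` of worlds, with a valuation. -/
structure Model (n k : ℕ) (W : Type*) where
  /-- The choice relation `R_[i]` of agent `i`. -/
  R : Fin (n + 1) → W → W → Prop
  equivalence (i) : Equivalence (R i)
  independence (ws : Fin (n + 1) → W) : ∃ u, ∀ i, R i (ws i) u
  limited_choice (hk : 0 < k) (i) (ws : Fin (k + 1) → W) :
    ∃ m j : Fin (k + 1), (m : ℕ) < j ∧ R i (ws m) (ws j)
  /-- The set `I_{⊗_i}` of worlds that are ideal for agent `i`. -/
  Ideal : Fin (n + 1) → W → Prop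
  exists_ideal (i) : ∃ u, Ideal i u
  ideal_of_R {i u v} : Ideal i u → R i u v → Ideal i v
  /-- The worlds at which an atom is true. -/
  V : ℕ → W → Prop

section Soundness

variable {n k : ℕ} {gR gG gS : Prop} {W : Type*} {M : Model n k W} {σ : ℕ → W} {RA : RAt n}
  {IA : DAt n} {Γ : SSeq n}

/-- Truth of a formula at a world of a model. -/
def Model.Sat (M : Model n k W) : SFml n → W → Prop
  | .pos p, w => M.V p w
  | .neg p, w => ¬ M.V p w
  | .or φ ψ, w => M.Sat φ w ∨ M.Sat ψ w
  | .and φ ψ, w => M.Sat φ w ∧ M.Sat ψ w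
  | .box φ, _ => ∀ u, M.Sat φ u
  | .dia φ, _ => ∃ u, M.Sat φ u
  | .abox i φ, w => ∀ u, M.R i w u → M.Sat φ u
  | .adia i φ, w => ∃ u, M.R i w u ∧ M.Sat φ u
  | .obl i φ, _ => ∀ u, M.Ideal i u → M.Sat φ u
  | .per i φ, _ => ∃ u, M.Ideal i u ∧ M.Sat φ u

theorem Model.sat_negnnf (M : Model n k W) (φ : SFml n) (w : W) :
    M.Sat φ.negnnf w ↔ ¬ M.Sat φ w := by
  induction φ generalizing w <;> simp_all [Sat, SFml.negnnf, imp_iff_not_or]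

/-- The interpretation `σ` of the labels in `M` is a countermodel to `RA, IA ⊢ Γ`. -/
def Model.Refutes (M : Model n k W) (σ : ℕ → W) (RA : RAt n) (IA : DAt n) (Γ : SSeq n) : Prop :=
  (∀ a ∈ RA, M.R a.1 (σ a.2.1) (σ a.2.2)) ∧ (∀ b ∈ IA, M.Ideal b.1 (σ b.2)) ∧
    ∀ c ∈ Γ, ¬ M.Sat c.2 (σ c.1)

namespace Model

@[simp]
theorem refutes_cons_rel {i : Fin (n + 1)} {w u : ℕ} :
    M.Refutes σ ((i, w, u) ::ₘ RA) IA Γ ↔ M.R i (σ w) (σ u) ∧ M.Refutes σ RA IA Γ := by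
  simp [Refutes, and_assoc]

@[simp]
theorem refutes_cons_ideal {i : Fin (n + 1)} {u : ℕ} :
    M.Refutes σ RA ((i, u) ::ₘ IA) Γ ↔ M.Ideal i (σ u) ∧ M.Refutes σ RA IA Γ := by
  simp only [Refutes, Multiset.forall_mem_cons]
  tauto

@[simp]
theorem refutes_cons_fml {w : ℕ} {φ : SFml n} :
    M.Refutes σ RA IA ((w, φ) ::ₘ Γ) ↔ ¬ M.Sat φ (σ w) ∧ M.Refutes σ RA IA Γ := by
  simp only [Refutes, Multiset.forall_mem_cons]
  tauto

theorem Refutes.mono {RA' : RAt n} {IA' : DAt n} {Γ' : SSeq n} (h : M.Refutes σ RA' IA' Γ')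
    (hRA : RA ⊆ RA') (hIA : IA ⊆ IA') (hΓ : Γ ⊆ Γ') : M.Refutes σ RA IA Γ :=
  ⟨fun a ha ↦ h.1 a (hRA ha), fun b hb ↦ h.2.1 b (hIA hb), fun c hc ↦ h.2.2 c (hΓ hc)⟩

theorem Refutes.congr {τ : ℕ → W} (h : M.Refutes σ RA IA Γ)
    (hστ : ∀ v, soccurs v RA IA Γ → τ v = σ v) : M.Refutes τ RA IA Γ := by
  refine ⟨fun a ha ↦ ?_, fun b hb ↦ ?_, fun c hc ↦ ?_⟩
  · rw [hστ _ (.inl ⟨_, _, _, ha, .inl rfl⟩), hστ _ (.inl ⟨_, _, _, ha, .inr rfl⟩)]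
    exact h.1 a ha
  · rw [hστ _ (.inr (.inl ⟨_, hb⟩))]
    exact h.2.1 b hb
  · rw [hστ _ (.inr (.inr ⟨_, hc⟩))]
    exact h.2.2 c hc

theorem Refutes.update {u : ℕ} (h : M.Refutes σ RA IA Γ) (hu : ¬ soccurs u RA IA Γ) (x : W) :
    M.Refutes (Function.update σ u x) RA IA Γ :=
  h.congr fun v hv ↦ Function.update_of_ne (by rintro rfl; exact hu hv) _ _

theorem Refutes.of_subst {w u : ℕ}
    (h : M.Refutes σ (substRAt w u RA) (substDAt w u IA) (substSSeq w u Γ)) :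
    M.Refutes (σ ∘ substLbl w u) RA IA Γ :=
  ⟨fun _ ha ↦ h.1 _ (Multiset.mem_map_of_mem _ ha),
    fun _ hb ↦ h.2.1 _ (Multiset.mem_map_of_mem _ hb),
    fun _ hc ↦ h.2.2 _ (Multiset.mem_map_of_mem _ hc)⟩

theorem Refutes.R_of_iPath (h : M.Refutes σ RA IA Γ) {i : Fin (n + 1)} {u v : ℕ}
    (huv : IPath RA i u v) : M.R i (σ u) (σ v) := by
  induction huv with
  | refl w => exact (M.equivalence i).refl _
  | fwd hw _ ih => exact (M.equivalence i).trans (h.1 _ hw) ih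
  | bwd hw _ ih => exact (M.equivalence i).trans ((M.equivalence i).symm (h.1 _ hw)) ih

theorem Refutes.ideal_of_iPath (h : M.Refutes σ RA IA Γ) {i : Fin (n + 1)} {u v : ℕ}
    (hu : (i, u) ∈ IA) (huv : IPath RA i u v) : M.Ideal i (σ v) :=
  M.ideal_of_R (h.2.1 _ hu) (h.R_of_iPath huv)

theorem Refutes.cons_of_sat_imp {w u : ℕ} {φ ψ : SFml n}
    (h : M.Refutes σ RA IA ((w, ψ) ::ₘ Γ)) (hφψ : M.Sat φ (σ u) → M.Sat ψ (σ w)) :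
    M.Refutes σ RA IA ((w, ψ) ::ₘ (u, φ) ::ₘ Γ) := by
  rw [refutes_cons_fml] at h
  exact refutes_cons_fml.2 ⟨h.1, refutes_cons_fml.2 ⟨mt hφψ h.1, h.2⟩⟩

theorem Refutes.exists_of_box {w u : ℕ} {φ : SFml n} (h : M.Refutes σ RA IA ((w, φ.box) ::ₘ Γ))
    (hu : ¬ soccurs u RA IA ((w, φ.box) ::ₘ Γ)) : ∃ τ, M.Refutes τ RA IA ((u, φ) ::ₘ Γ) := by
  obtain ⟨x, hx⟩ := not_forall.1 (refutes_cons_fml.1 h).1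
  have h' := (refutes_cons_fml.1 (h.update hu x)).2
  exact ⟨_, refutes_cons_fml.2 ⟨by simpa using hx, h'⟩⟩

theorem Refutes.exists_of_abox {w u : ℕ} {i : Fin (n + 1)} {φ : SFml n}
    (h : M.Refutes σ RA IA ((w, φ.abox i) ::ₘ Γ))
    (hu : ¬ soccurs u RA IA ((w, φ.abox i) ::ₘ Γ)) :
    ∃ τ, M.Refutes τ ((i, w, u) ::ₘ RA) IA ((u, φ) ::ₘ Γ) := by
  have hwu : w ≠ u := by
    rintro rfl
    exact hu (.inr (.inr ⟨_, Multiset.mem_cons_self _ _⟩))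
  obtain ⟨x, hwx, hx⟩ : ∃ x, M.R i (σ w) x ∧ ¬ M.Sat φ x := by
    simpa [Sat] using (refutes_cons_fml.1 h).1
  have h' := (refutes_cons_fml.1 (h.update hu x)).2
  exact ⟨Function.update σ u x, by simp [hwu, hwx, hx, h']⟩

theorem Refutes.exists_of_obl {w u : ℕ} {i : Fin (n + 1)} {φ : SFml n}
    (h : M.Refutes σ RA IA ((w, φ.obl i) ::ₘ Γ))
    (hu : ¬ soccurs u RA IA ((w, φ.obl i) ::ₘ Γ)) :
    ∃ τ, M.Refutes τ RA ((i, u) ::ₘ IA) ((u, φ) ::ₘ Γ) := by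
  obtain ⟨x, hxi, hx⟩ : ∃ x, M.Ideal i x ∧ ¬ M.Sat φ x := by
    simpa [Sat] using (refutes_cons_fml.1 h).1
  have h' := (refutes_cons_fml.1 (h.update hu x)).2
  exact ⟨Function.update σ u x, by simp [hxi, hx, h']⟩

theorem Refutes.exists_ideal {u : ℕ} (h : M.Refutes σ RA IA Γ) (hu : ¬ soccurs u RA IA Γ)
    (i : Fin (n + 1)) : ∃ τ, M.Refutes τ RA ((i, u) ::ₘ IA) Γ := by
  obtain ⟨x, hx⟩ := M.exists_ideal i
  exact ⟨_, refutes_cons_ideal.2 ⟨by simpa using hx, h.update hu x⟩⟩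

theorem Refutes.exists_of_per {w u : ℕ} {i : Fin (n + 1)} {φ : SFml n}
    (h : M.Refutes σ RA IA ((w, φ.per i) ::ₘ Γ))
    (hu : ¬ soccurs u RA IA ((w, φ.per i) ::ₘ Γ)) :
    ∃ τ, M.Refutes τ RA ((i, u) ::ₘ IA) ((w, φ.per i) ::ₘ (u, φ) ::ₘ Γ) := by
  obtain ⟨τ, hτ⟩ := h.exists_ideal hu i
  exact ⟨τ, hτ.cons_of_sat_imp fun hφ ↦ ⟨_, (refutes_cons_ideal.1 hτ).1, hφ⟩⟩

theorem Refutes.exists_of_independence {u : ℕ} (h : M.Refutes σ RA IA Γ)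
    (hu : ¬ soccurs u RA IA Γ) (ws : Fin (n + 1) → ℕ) :
    ∃ τ, M.Refutes τ ((Finset.univ.val.map fun i ↦ (i, ws i, u)) + RA) IA Γ := by
  obtain ⟨x, hx⟩ := M.independence fun i ↦ σ (ws i)
  obtain ⟨hRA, h'⟩ := h.update hu x
  refine ⟨Function.update σ u x, fun a ha ↦ ?_, h'⟩
  obtain ha | ha := Multiset.mem_add.1 ha
  · obtain ⟨i, -, rfl⟩ := Multiset.mem_map.1 ha
    obtain hi | hi := eq_or_ne (ws i) u
    · simpa [hi] using (M.equivalence i).refl x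
    · simpa [hi] using hx i
  · exact hRA a ha

theorem Refutes.exists_of_limited_choice (h : M.Refutes σ RA IA Γ) (hk : 0 < k)
    (i : Fin (n + 1)) (ws : Fin (k + 1) → ℕ) :
    ∃ m j : Fin (k + 1), (m : ℕ) < j ∧ M.Refutes σ ((i, ws m, ws j) ::ₘ RA) IA Γ := by
  obtain ⟨m, j, hmj, hR⟩ := M.limited_choice hk i fun m ↦ σ (ws m)
  exact ⟨m, j, hmj, refutes_cons_rel.2 ⟨hR, h⟩⟩

end Model

theorem SDer.not_refutes (h : SDer n k gR gG gS RA IA Γ) (M : Model n k W) (σ : ℕ → W) :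
    ¬ M.Refutes σ RA IA Γ := by
  induction h generalizing σ with (intro h)
  | id =>
    simp only [Model.refutes_cons_fml, Model.Sat] at h
    exact h.2.1 h.1
  | orr _ ih => exact ih σ (by simpa [Model.Sat, and_assoc] using h)
  | andr _ _ ih₁ ih₂ =>
    simp only [Model.refutes_cons_fml, Model.Sat] at h ih₁ ih₂
    exact h.1 ⟨not_not.1 fun hφ ↦ ih₁ σ ⟨hφ, h.2⟩, not_not.1 fun hψ ↦ ih₂ σ ⟨hψ, h.2⟩⟩
  | diar _ ih => exact ih σ (h.cons_of_sat_imp fun hφ ↦ ⟨_, hφ⟩)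
  | boxr hu _ ih => exact (h.exists_of_box hu).elim ih
  | aboxr hu _ ih => exact (h.exists_of_abox hu).elim ih
  | oblr hu _ ih => exact (h.exists_of_obl hu).elim ih
  | ioa ws u hu _ ih => exact (h.exists_of_independence hu ws).elim ih
  | apc hk i ws _ ih =>
    obtain ⟨m, j, hmj, hσ⟩ := h.exists_of_limited_choice hk i ws
    exact ih m j hmj σ hσ
  | prAdia _ huv _ ih => exact ih σ (h.cons_of_sat_imp fun hφ ↦ ⟨_, h.R_of_iPath huv, hφ⟩)
  | prPer1 _ huv _ ih =>
    have hv := h.ideal_of_iPath (Multiset.mem_cons_self _ _) huv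
    exact ih σ (h.cons_of_sat_imp fun hφ ↦ ⟨_, hv, hφ⟩)
  | prPer2 _ hu _ ih => exact (h.exists_of_per hu).elim ih
  | adiar _ _ ih =>
    exact ih σ (h.cons_of_sat_imp fun hφ ↦ ⟨_, (Model.refutes_cons_rel.1 h).1, hφ⟩)
  | operr _ _ ih =>
    exact ih σ (h.cons_of_sat_imp fun hφ ↦ ⟨_, (Model.refutes_cons_ideal.1 h).1, hφ⟩)
  | @refl _ _ _ _ i _ _ ih => exact ih σ (Model.refutes_cons_rel.2 ⟨(M.equivalence i).refl _, h⟩)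
  | @euc _ _ _ _ _ _ i _ _ ih =>
    simp only [Model.refutes_cons_rel] at h ih
    exact ih σ ⟨h.1, h.2.1, (M.equivalence i).trans ((M.equivalence i).symm h.1) h.2.1, h.2.2⟩
  | @d2 _ _ _ _ i _ hu _ ih => exact (h.exists_ideal hu i).elim ih
  | d3 _ _ ih =>
    simp only [Model.refutes_cons_rel, Model.refutes_cons_ideal] at h ih
    exact ih σ ⟨h.1, M.ideal_of_R h.1 h.2.1, h.2⟩
  | subst w u _ _ ih => exact ih _ h.of_subst
  | wk _ _ ih =>
    exact ih σ (h.mono (fun _ ↦ Multiset.mem_add.2 ∘ .inl) (fun _ ↦ Multiset.mem_add.2 ∘ .inl)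
      fun _ ↦ Multiset.mem_add.2 ∘ .inl)
  | ctrR a _ _ ih => exact ih σ (h.mono (by simp) (by simp) (by simp))
  | ctrI b _ _ ih => exact ih σ (h.mono (by simp) (by simp) (by simp))
  | ctrF w φ _ _ ih => exact ih σ (h.mono (by simp) (by simp) (by simp))
  | cut w φ _ _ _ ih₁ ih₂ =>
    simp only [Model.refutes_cons_fml, Model.sat_negnnf] at ih₁ ih₂
    exact ih₁ σ ⟨fun hφ ↦ ih₂ σ ⟨not_not.2 hφ, h⟩, h⟩

end Soundness

/-- A form of the Rasiowa–Sikorski lemma. -/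
theorem exists_ideal_meeting {P ι : Type*} [Preorder P] [Countable ι] {E Q : ι → P → Prop}
    (hE : ∀ i, Monotone (E i)) (h : ∀ i p, E i p → ∃ q ≥ p, Q i q) (p : P) :
    ∃ I : Order.Ideal P, p ∈ I ∧ ∀ i, ∀ q ∈ I, E i q → ∃ r ∈ I, Q i r := by
  have := Encodable.ofCountable ι
  let 𝒟 (i : ι) : Order.Cofinal P :=
    { carrier := {q | Q i q ∨ ∀ r ≥ q, ¬ E i r}
      isCofinal := fun q ↦ by
        by_cases hq : ∃ r ≥ q, E i r
        · obtain ⟨r, hqr, hr⟩ := hq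
          obtain ⟨s, hrs, hs⟩ := h i r hr
          exact ⟨s, .inl hs, hqr.trans hrs⟩
        · push Not at hq
          exact ⟨q, .inr hq, le_rfl⟩ }
  refine ⟨Order.idealOfCofinals p 𝒟, Order.mem_idealOfCofinals p 𝒟, fun i q hq hEq ↦ ?_⟩
  obtain ⟨r, hr | hr, hrI⟩ := Order.cofinal_meets_idealOfCofinals p 𝒟 i
  · exact ⟨r, hrI, hr⟩
  · obtain ⟨t, -, hqt, hrt⟩ := Order.Ideal.directed _ q hq r hrI
    exact absurd (hE i hqt hEq) (hr t hrt)

theorem exists_not_soccurs {n : ℕ} (RA : RAt n) (IA : DAt n) (Γ : SSeq n) :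
    ∃ u, ¬ soccurs u RA IA Γ := by
  obtain ⟨u, hu⟩ := Infinite.exists_notMem_finset
    (RA.map (·.2.1) + RA.map (·.2.2) + IA.map (·.2) + Γ.map (·.1)).toFinset
  simp only [Multiset.mem_toFinset, Multiset.mem_add, Multiset.mem_map, not_or] at hu
  refine ⟨u, ?_⟩
  rintro (⟨i, w, v, h, rfl | rfl⟩ | ⟨i, h⟩ | ⟨φ, h⟩)
  · exact hu.1.1.1 ⟨_, h, rfl⟩
  · exact hu.1.1.2 ⟨_, h, rfl⟩
  · exact hu.1.2 ⟨_, h, rfl⟩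
  · exact hu.2 ⟨_, h, rfl⟩

theorem IPath.mono {n : ℕ} {RA RA' : RAt n} (hRA : RA ⊆ RA') {i : Fin (n + 1)} {w u : ℕ}
    (h : IPath RA i w u) : IPath RA' i w u := by
  induction h with
  | refl w => exact .refl w
  | fwd h _ ih => exact .fwd (hRA h) ih
  | bwd h _ ih => exact .bwd (hRA h) ih

theorem IPath.trans {n : ℕ} {RA : RAt n} {i : Fin (n + 1)} {w u v : ℕ} (hwu : IPath RA i w u)
    (huv : IPath RA i u v) : IPath RA i w v := by
  induction hwu with
  | refl w => exact huv
  | fwd h _ ih => exact .fwd h (ih huv)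
  | bwd h _ ih => exact .bwd h (ih huv)

theorem IPath.symm {n : ℕ} {RA : RAt n} {i : Fin (n + 1)} {w u : ℕ} (h : IPath RA i w u) :
    IPath RA i u w := by
  induction h with
  | refl w => exact .refl w
  | fwd h _ ih => exact ih.trans (.bwd h (.refl _))
  | bwd h _ ih => exact ih.trans (.fwd h (.refl _))

/-- A labelled sequent, bundled so that sequents can be ordered. -/
structure Sequent (n : ℕ) where
  /-- The relational atoms. -/
  rel : RAt n
  /-- The deontic atoms. -/
  deon : DAt n
  /-- The labelled formulae. -/
  fml : SSeq n

/-- `s` covers `w : φ` if `w : φ` occurs in `s` or was replaced by formulae that `s` covers.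
Backward applications of `(∨r)`, `(∧r)`, `(□)`, `([i])` and `(⊗_i)` erase the principal formula, but
it stays covered. -/
inductive Sequent.Covers {n : ℕ} (s : Sequent n) : ℕ → SFml n → Prop
  | mem {w : ℕ} {φ : SFml n} : (w, φ) ∈ s.fml → Covers s w φ
  | or {w : ℕ} {φ ψ : SFml n} : Covers s w φ → Covers s w ψ → Covers s w (φ.or ψ)
  | and_left {w : ℕ} {φ ψ : SFml n} : Covers s w φ → Covers s w (φ.and ψ)
  | and_right {w : ℕ} {φ ψ : SFml n} : Covers s w ψ → Covers s w (φ.and ψ)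
  | box {w u : ℕ} {φ : SFml n} : Covers s u φ → Covers s w φ.box
  | abox {w u : ℕ} {i : Fin (n + 1)} {φ : SFml n} :
      (i, w, u) ∈ s.rel → Covers s u φ → Covers s w (φ.abox i)
  | obl {w u : ℕ} {i : Fin (n + 1)} {φ : SFml n} :
      (i, u) ∈ s.deon → Covers s u φ → Covers s w (φ.obl i)

namespace Sequent

variable {n : ℕ}

/-- The extension order of proof search: `s ≤ t` if `t` has the atoms of `s` and covers
everything that `s` covers. -/
instance : Preorder (Sequent n) where
  le s t := s.rel ⊆ t.rel ∧ s.deon ⊆ t.deon ∧ ∀ ⦃w φ⦄, s.Covers w φ → t.Covers w φ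
  le_refl _ := ⟨fun _ ↦ id, fun _ ↦ id, fun _ _ ↦ id⟩
  le_trans _ _ _ h h' :=
    ⟨fun _ ↦ @h'.1 _ ∘ @h.1 _, fun _ ↦ @h'.2.1 _ ∘ @h.2.1 _, fun _ _ ↦ @h'.2.2 _ _ ∘ @h.2.2 _ _⟩

theorem le_of_covers {s t : Sequent n} (hrel : s.rel ⊆ t.rel) (hdeon : s.deon ⊆ t.deon)
    (hfml : ∀ w φ, (w, φ) ∈ s.fml → t.Covers w φ) : s ≤ t := by
  refine ⟨hrel, hdeon, fun w φ h ↦ ?_⟩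
  induction h with
  | mem h => exact hfml _ _ h
  | or _ _ ih₁ ih₂ => exact .or ih₁ ih₂
  | and_left _ ih => exact .and_left ih
  | and_right _ ih => exact .and_right ih
  | box _ ih => exact .box ih
  | abox h _ ih => exact .abox (hrel h) ih
  | obl h _ ih => exact .obl (hdeon h) ih

theorem le_of_covers_principal {RA RA' : RAt n} {IA IA' : DAt n} {Γ Γ' : SSeq n} {w : ℕ}
    {φ : SFml n} (hRA : RA ⊆ RA') (hIA : IA ⊆ IA') (hΓ : Γ ⊆ Γ')
    (h : Covers ⟨RA', IA', Γ'⟩ w φ) :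
    (⟨RA, IA, (w, φ) ::ₘ Γ⟩ : Sequent n) ≤ ⟨RA', IA', Γ'⟩ := by
  refine le_of_covers hRA hIA fun v ψ hv ↦ ?_
  obtain hv | hv := Multiset.mem_cons.1 hv
  · cases hv
    exact h
  · exact .mem (hΓ hv)

end Sequent

/-- The sequents that are not derivable in `DS_n^k L`, with the extension order. -/
abbrev Underivable (n k : ℕ) : Type := {s : Sequent n // ¬ DSL n k s.rel s.deon s.fml}

namespace Underivable

variable {n k : ℕ} {s : Underivable n k} {w v : ℕ} {i : Fin (n + 1)} {φ ψ : SFml n}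

theorem not_covers_neg (hpos : s.1.Covers w (.pos v)) : ¬ s.1.Covers w (.neg v) := by
  rintro ⟨hneg⟩
  obtain ⟨hpos⟩ := hpos
  obtain ⟨⟨RA, IA, Γ⟩, hs⟩ := s
  obtain ⟨Γ, rfl⟩ := Multiset.exists_cons_of_mem hpos
  obtain ⟨Γ, rfl⟩ := Multiset.exists_cons_of_mem ((Multiset.mem_cons.1 hneg).resolve_left nofun)
  exact hs (.id _ _ _ _ _)

theorem exists_ge_of_covers_or (h : s.1.Covers w (φ.or ψ)) :
    ∃ t ≥ s, t.1.Covers w φ ∧ t.1.Covers w ψ := by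
  cases h with
  | mem hmem =>
    obtain ⟨⟨RA, IA, Γ⟩, hs⟩ := s
    obtain ⟨Γ, rfl⟩ := Multiset.exists_cons_of_mem hmem
    let t : Sequent n := ⟨RA, IA, (w, φ) ::ₘ (w, ψ) ::ₘ Γ⟩
    have hφ : t.Covers w φ := .mem (by simp [t])
    have hψ : t.Covers w ψ := .mem (by simp [t])
    exact ⟨⟨t, fun ht ↦ hs (.orr ht)⟩,
      Sequent.le_of_covers_principal (by simp) (by simp) (by simp +contextual [Multiset.subset_iff])
        (.or hφ hψ), hφ, hψ⟩
  | or hφ hψ => exact ⟨s, le_rfl, hφ, hψ⟩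

theorem exists_ge_of_covers_and (h : s.1.Covers w (φ.and ψ)) :
    ∃ t ≥ s, t.1.Covers w φ ∨ t.1.Covers w ψ := by
  cases h with
  | mem hmem =>
    obtain ⟨⟨RA, IA, Γ⟩, hs⟩ := s
    obtain ⟨Γ, rfl⟩ := Multiset.exists_cons_of_mem hmem
    have hcov (χ : SFml n) : Sequent.Covers ⟨RA, IA, (w, χ) ::ₘ Γ⟩ w χ := .mem (by simp)
    by_cases hφ : DSL n k RA IA ((w, φ) ::ₘ Γ)
    · exact ⟨⟨⟨RA, IA, (w, ψ) ::ₘ Γ⟩, fun hψ ↦ hs (.andr hφ hψ)⟩,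
        Sequent.le_of_covers_principal (by simp) (by simp) (Multiset.subset_cons _ _)
          (.and_right (hcov ψ)),
        .inr (hcov ψ)⟩
    · exact ⟨⟨⟨RA, IA, (w, φ) ::ₘ Γ⟩, hφ⟩,
        Sequent.le_of_covers_principal (by simp) (by simp) (Multiset.subset_cons _ _)
          (.and_left (hcov φ)),
        .inl (hcov φ)⟩
  | and_left hφ => exact ⟨s, le_rfl, .inl hφ⟩
  | and_right hψ => exact ⟨s, le_rfl, .inr hψ⟩

theorem exists_ge_of_covers_box (h : s.1.Covers w φ.box) : ∃ t ≥ s, ∃ u, t.1.Covers u φ := by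
  cases h with
  | mem hmem =>
    obtain ⟨⟨RA, IA, Γ⟩, hs⟩ := s
    obtain ⟨Γ, rfl⟩ := Multiset.exists_cons_of_mem hmem
    obtain ⟨u, hu⟩ := exists_not_soccurs RA IA ((w, φ.box) ::ₘ Γ)
    let t : Sequent n := ⟨RA, IA, (u, φ) ::ₘ Γ⟩
    have hφ : t.Covers u φ := .mem (by simp [t])
    exact ⟨⟨t, fun ht ↦ hs (.boxr hu ht)⟩,
      Sequent.le_of_covers_principal (by simp) (by simp) (Multiset.subset_cons _ _) (.box hφ),
      u, hφ⟩
  | @box _ u _ hφ => exact ⟨s, le_rfl, u, hφ⟩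

theorem exists_ge_of_covers_abox (h : s.1.Covers w (φ.abox i)) :
    ∃ t ≥ s, ∃ u, (i, w, u) ∈ t.1.rel ∧ t.1.Covers u φ := by
  cases h with
  | mem hmem =>
    obtain ⟨⟨RA, IA, Γ⟩, hs⟩ := s
    obtain ⟨Γ, rfl⟩ := Multiset.exists_cons_of_mem hmem
    obtain ⟨u, hu⟩ := exists_not_soccurs RA IA ((w, φ.abox i) ::ₘ Γ)
    let t : Sequent n := ⟨(i, w, u) ::ₘ RA, IA, (u, φ) ::ₘ Γ⟩
    have hwu : (i, w, u) ∈ t.rel := Multiset.mem_cons_self _ _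
    have hφ : t.Covers u φ := .mem (by simp [t])
    exact ⟨⟨t, fun ht ↦ hs (.aboxr hu ht)⟩,
      Sequent.le_of_covers_principal (Multiset.subset_cons _ _) (by simp) (Multiset.subset_cons _ _)
        (.abox hwu hφ), u, hwu, hφ⟩
  | @abox _ u _ _ hwu hφ => exact ⟨s, le_rfl, u, hwu, hφ⟩

theorem exists_ge_of_covers_obl (h : s.1.Covers w (φ.obl i)) :
    ∃ t ≥ s, ∃ u, (i, u) ∈ t.1.deon ∧ t.1.Covers u φ := by
  cases h with
  | mem hmem =>
    obtain ⟨⟨RA, IA, Γ⟩, hs⟩ := s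
    obtain ⟨Γ, rfl⟩ := Multiset.exists_cons_of_mem hmem
    obtain ⟨u, hu⟩ := exists_not_soccurs RA IA ((w, φ.obl i) ::ₘ Γ)
    let t : Sequent n := ⟨RA, (i, u) ::ₘ IA, (u, φ) ::ₘ Γ⟩
    have hiu : (i, u) ∈ t.deon := Multiset.mem_cons_self _ _
    have hφ : t.Covers u φ := .mem (by simp [t])
    exact ⟨⟨t, fun ht ↦ hs (.oblr hu ht)⟩,
      Sequent.le_of_covers_principal (by simp) (Multiset.subset_cons _ _) (Multiset.subset_cons _ _)
        (.obl hiu hφ), u, hiu, hφ⟩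
  | @obl _ u _ _ hiu hφ => exact ⟨s, le_rfl, u, hiu, hφ⟩

theorem exists_ge_covers_of_rule (hmem : (w, φ) ∈ s.1.fml)
    (hrule : ∀ Γ, DSL n k s.1.rel s.1.deon ((w, φ) ::ₘ (v, ψ) ::ₘ Γ) →
      DSL n k s.1.rel s.1.deon ((w, φ) ::ₘ Γ)) :
    ∃ t ≥ s, t.1.Covers v ψ := by
  obtain ⟨⟨RA, IA, Γ⟩, hs⟩ := s
  obtain ⟨Γ, rfl⟩ := Multiset.exists_cons_of_mem hmem
  exact ⟨⟨⟨RA, IA, (w, φ) ::ₘ (v, ψ) ::ₘ Γ⟩, fun ht ↦ hs (hrule Γ ht)⟩,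
    Sequent.le_of_covers_principal (by simp) (by simp) (by simp +contextual [Multiset.subset_iff])
      (.mem (by simp)), .mem (by simp)⟩

theorem exists_ge_of_covers_dia (h : s.1.Covers w φ.dia) (v : ℕ) :
    ∃ t ≥ s, t.1.Covers v φ := by
  obtain ⟨hmem⟩ := h
  exact exists_ge_covers_of_rule hmem fun _ ↦ .diar

theorem exists_ge_of_covers_adia (h : s.1.Covers w (φ.adia i)) (hwv : IPath s.1.rel i w v) :
    ∃ t ≥ s, t.1.Covers v φ := by
  obtain ⟨hmem⟩ := h
  exact exists_ge_covers_of_rule hmem fun _ ↦ .prAdia trivial hwv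

theorem exists_ge_of_covers_per (h : s.1.Covers w (φ.per i)) {u : ℕ} (hu : (i, u) ∈ s.1.deon)
    (huv : IPath s.1.rel i u v) : ∃ t ≥ s, t.1.Covers v φ := by
  obtain ⟨hmem⟩ := h
  refine exists_ge_covers_of_rule hmem fun Γ h ↦ ?_
  obtain ⟨IA, hIA⟩ := Multiset.exists_cons_of_mem hu
  rw [hIA] at h ⊢
  exact .prPer1 trivial huv h

theorem exists_ge_deon_of_covers_per (h : s.1.Covers w (φ.per i)) :
    ∃ t ≥ s, ∃ u, (i, u) ∈ t.1.deon := by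
  obtain ⟨hmem⟩ := h
  obtain ⟨⟨RA, IA, Γ⟩, hs⟩ := s
  obtain ⟨Γ, rfl⟩ := Multiset.exists_cons_of_mem hmem
  obtain ⟨u, hu⟩ := exists_not_soccurs RA IA ((w, φ.per i) ::ₘ Γ)
  exact ⟨⟨⟨RA, (i, u) ::ₘ IA, (w, φ.per i) ::ₘ (u, φ) ::ₘ Γ⟩, fun ht ↦ hs (.prPer2 trivial hu ht)⟩,
    Sequent.le_of_covers_principal (by simp) (Multiset.subset_cons _ _)
      (by simp +contextual [Multiset.subset_iff]) (.mem (by simp)), u, by simp⟩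

theorem exists_ge_independence (s : Underivable n k) (ws : Fin (n + 1) → ℕ) :
    ∃ t ≥ s, ∃ u, ∀ i, (i, ws i, u) ∈ t.1.rel := by
  obtain ⟨⟨RA, IA, Γ⟩, hs⟩ := s
  obtain ⟨u, hu⟩ := exists_not_soccurs RA IA Γ
  exact ⟨⟨⟨(Finset.univ.val.map fun i ↦ (i, ws i, u)) + RA, IA, Γ⟩,
    fun ht ↦ hs (.ioa ws u hu ht)⟩, Sequent.le_of_covers (fun _ ↦ Multiset.mem_add.2 ∘ .inr)
      (fun _ ↦ id) (fun _ _ h ↦ .mem h), u,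
    fun i ↦ Multiset.mem_add.2 (.inl (Multiset.mem_map_of_mem _ (Finset.mem_univ_val i)))⟩

theorem exists_ge_limited_choice (s : Underivable n k) (hk : 0 < k) (i : Fin (n + 1))
    (ws : Fin (k + 1) → ℕ) :
    ∃ t ≥ s, ∃ m j : Fin (k + 1), (m : ℕ) < j ∧ (i, ws m, ws j) ∈ t.1.rel := by
  obtain ⟨⟨RA, IA, Γ⟩, hs⟩ := s
  obtain ⟨m, j, hmj, ht⟩ : ∃ m j : Fin (k + 1), (m : ℕ) < j ∧
      ¬ DSL n k ((i, ws m, ws j) ::ₘ RA) IA Γ := by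
    by_contra! hall
    exact hs (.apc hk i ws hall)
  exact ⟨⟨⟨(i, ws m, ws j) ::ₘ RA, IA, Γ⟩, ht⟩,
    Sequent.le_of_covers (Multiset.subset_cons _ _) (fun _ ↦ id) (fun _ _ h ↦ .mem h),
    m, j, hmj, Multiset.mem_cons_self _ _⟩

end Underivable

/-- A Gödel numbering of the formulae, which shows that they are countable. -/
def SFml.code {n : ℕ} : SFml n → ℕ
  | .pos p => Nat.pair 0 p
  | .neg p => Nat.pair 1 p
  | .or φ ψ => Nat.pair 2 (Nat.pair φ.code ψ.code)
  | .and φ ψ => Nat.pair 3 (Nat.pair φ.code ψ.code)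
  | .box φ => Nat.pair 4 φ.code
  | .dia φ => Nat.pair 5 φ.code
  | .abox i φ => Nat.pair 6 (Nat.pair i φ.code)
  | .adia i φ => Nat.pair 7 (Nat.pair i φ.code)
  | .obl i φ => Nat.pair 8 (Nat.pair i φ.code)
  | .per i φ => Nat.pair 9 (Nat.pair i φ.code)

theorem SFml.code_injective {n : ℕ} : Function.Injective (code (n := n)) := by
  intro φ ψ h
  induction φ generalizing ψ <;> cases ψ <;>
    simp only [code, Nat.pair_eq_pair, Fin.val_inj] at h <;> grind

instance {n : ℕ} : Countable (SFml n) :=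
  SFml.code_injective.countable

/-- The demands that the rules of `DS_n^k L`, read backwards, make on a proof search. -/
inductive Demand (n k : ℕ) : Type
  | or (w : ℕ) (φ ψ : SFml n)
  | and (w : ℕ) (φ ψ : SFml n)
  | box (w : ℕ) (φ : SFml n)
  | abox (w : ℕ) (i : Fin (n + 1)) (φ : SFml n)
  | obl (w : ℕ) (i : Fin (n + 1)) (φ : SFml n)
  | dia (w v : ℕ) (φ : SFml n)
  | adia (w v : ℕ) (i : Fin (n + 1)) (φ : SFml n)
  | per (w v : ℕ) (i : Fin (n + 1)) (φ : SFml n)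
  | perDeon (w : ℕ) (i : Fin (n + 1)) (φ : SFml n)
  | independence (ws : Fin (n + 1) → ℕ)
  | limitedChoice (i : Fin (n + 1)) (ws : Fin (k + 1) → ℕ)
  deriving Countable

namespace Demand

variable {n k : ℕ}

/-- The sequents at which a demand arises. -/
def Enabled : Demand n k → Sequent n → Prop
  | or w φ ψ, s => s.Covers w (φ.or ψ)
  | and w φ ψ, s => s.Covers w (φ.and ψ)
  | box w φ, s => s.Covers w φ.box
  | abox w i φ, s => s.Covers w (φ.abox i)
  | obl w i φ, s => s.Covers w (φ.obl i)
  | dia w _ φ, s => s.Covers w φ.dia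
  | adia w v i φ, s => s.Covers w (φ.adia i) ∧ IPath s.rel i w v
  | per w v i φ, s => s.Covers w (φ.per i) ∧ ∃ u, (i, u) ∈ s.deon ∧ IPath s.rel i u v
  | perDeon w i φ, s => s.Covers w (φ.per i)
  | independence _, _ => True
  | limitedChoice _ _, _ => 0 < k

/-- The sequents at which a demand has been met. -/
def Fulfilled : Demand n k → Sequent n → Prop
  | or w φ ψ, t => t.Covers w φ ∧ t.Covers w ψ
  | and w φ ψ, t => t.Covers w φ ∨ t.Covers w ψ
  | box _ φ, t => ∃ u, t.Covers u φ
  | abox w i φ, t => ∃ u, (i, w, u) ∈ t.rel ∧ t.Covers u φ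
  | obl _ i φ, t => ∃ u, (i, u) ∈ t.deon ∧ t.Covers u φ
  | dia _ v φ, t => t.Covers v φ
  | adia _ v _ φ, t => t.Covers v φ
  | per _ v _ φ, t => t.Covers v φ
  | perDeon _ i _, t => ∃ u, (i, u) ∈ t.deon
  | independence ws, t => ∃ u, ∀ i, (i, ws i, u) ∈ t.rel
  | limitedChoice i ws, t => ∃ m j : Fin (k + 1), (m : ℕ) < j ∧ (i, ws m, ws j) ∈ t.rel

theorem monotone_enabled (d : Demand n k) : Monotone d.Enabled := by
  rintro s t ⟨hrel, hdeon, hcov⟩ h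
  cases d with
  | adia => exact ⟨hcov h.1, h.2.mono hrel⟩
  | per =>
    obtain ⟨h, u, hu, huv⟩ := h
    exact ⟨hcov h, u, hdeon hu, huv.mono hrel⟩
  | independence => trivial
  | limitedChoice => exact h
  | _ => exact hcov h

theorem Enabled.exists_ge_fulfilled {d : Demand n k} {s : Underivable n k} (h : d.Enabled s.1) :
    ∃ t ≥ s, d.Fulfilled t.1 := by
  cases d with
  | or => exact Underivable.exists_ge_of_covers_or h
  | and => exact Underivable.exists_ge_of_covers_and h
  | box => exact Underivable.exists_ge_of_covers_box h
  | abox => exact Underivable.exists_ge_of_covers_abox h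
  | obl => exact Underivable.exists_ge_of_covers_obl h
  | dia => exact Underivable.exists_ge_of_covers_dia h _
  | adia => exact Underivable.exists_ge_of_covers_adia h.1 h.2
  | per =>
    obtain ⟨h, u, hu, huv⟩ := h
    exact Underivable.exists_ge_of_covers_per h hu huv
  | perDeon => exact Underivable.exists_ge_deon_of_covers_per h
  | independence ws => exact s.exists_ge_independence ws
  | limitedChoice i ws => exact s.exists_ge_limited_choice h i ws

end Demand

section Completeness

variable {n k : ℕ} {I : Order.Ideal (Underivable n k)}

/-- An ideal of underivable sequents in which every demand that arises is eventually met. -/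
def IsGeneric (I : Order.Ideal (Underivable n k)) : Prop :=
  ∀ d : Demand n k, ∀ s ∈ I, d.Enabled s.1 → ∃ t ∈ I, d.Fulfilled t.1

theorem exists_isGeneric (s : Underivable n k) :
    ∃ I : Order.Ideal (Underivable n k), s ∈ I ∧ IsGeneric I :=
  exists_ideal_meeting (fun d _ _ hst ↦ d.monotone_enabled hst)
    (fun _ _ ↦ Demand.Enabled.exists_ge_fulfilled) s

/-- The limit of a generic ideal. Any world is ideal for an agent about whom no sequent of the
ideal has a deontic atom, so that every agent has ideal worlds. -/
def limitModel (hI : IsGeneric I) : Model n k ℕ where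
  R i w u := ∃ s ∈ I, IPath s.1.rel i w u
  equivalence i :=
    { refl w := let ⟨s, hs⟩ := I.nonempty; ⟨s, hs, .refl w⟩
      symm := fun ⟨s, hs, h⟩ ↦ ⟨s, hs, h.symm⟩
      trans := fun ⟨s, hs, h⟩ ⟨t, ht, h'⟩ ↦ by
        obtain ⟨r, hr, hsr, htr⟩ := I.directed s hs t ht
        exact ⟨r, hr, (h.mono hsr.1).trans (h'.mono htr.1)⟩ }
  independence ws := by
    obtain ⟨s, hs⟩ := I.nonempty
    obtain ⟨t, ht, u, hu⟩ := hI (.independence ws) s hs trivial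
    exact ⟨u, fun i ↦ ⟨t, ht, .fwd (hu i) (.refl u)⟩⟩
  limited_choice hk i ws := by
    obtain ⟨s, hs⟩ := I.nonempty
    obtain ⟨t, ht, m, j, hmj, h⟩ := hI (.limitedChoice i ws) s hs hk
    exact ⟨m, j, hmj, t, ht, .fwd h (.refl _)⟩
  Ideal i v := (∃ s ∈ I, ∃ u, (i, u) ∈ s.1.deon) →
    ∃ s ∈ I, ∃ u, (i, u) ∈ s.1.deon ∧ IPath s.1.rel i u v
  exists_ideal i := by
    by_cases h : ∃ s ∈ I, ∃ u, (i, u) ∈ s.1.deon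
    · obtain ⟨s, hs, u, hu⟩ := h
      exact ⟨u, fun _ ↦ ⟨s, hs, u, hu, .refl u⟩⟩
    · exact ⟨0, fun h' ↦ absurd h' h⟩
  ideal_of_R := by
    rintro i u v hu ⟨t, ht, huv⟩ h
    obtain ⟨s, hs, x, hx, hxu⟩ := hu h
    obtain ⟨r, hr, hsr, htr⟩ := I.directed s hs t ht
    exact ⟨r, hr, x, hsr.2.1 hx, (hxu.mono hsr.1).trans (huv.mono htr.1)⟩
  V p w := ∃ s ∈ I, s.1.Covers w (.neg p)

theorem not_sat_limitModel (hI : IsGeneric I) {s : Underivable n k} (hs : s ∈ I) {w : ℕ}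
    {φ : SFml n} (h : s.1.Covers w φ) : ¬ (limitModel hI).Sat φ w := by
  induction φ generalizing s w with
  | pos p =>
    rintro ⟨t, ht, hneg⟩
    obtain ⟨r, -, hsr, htr⟩ := I.directed s hs t ht
    exact Underivable.not_covers_neg (hsr.2.2 h) (htr.2.2 hneg)
  | neg p => exact fun hsat ↦ hsat ⟨s, hs, h⟩
  | or φ ψ ihφ ihψ =>
    obtain ⟨t, ht, hφ, hψ⟩ := hI (.or w φ ψ) s hs h
    exact not_or.2 ⟨ihφ ht hφ, ihψ ht hψ⟩
  | and φ ψ ihφ ihψ =>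
    obtain ⟨t, ht, hφ | hψ⟩ := hI (.and w φ ψ) s hs h
    · exact fun hsat ↦ ihφ ht hφ hsat.1
    · exact fun hsat ↦ ihψ ht hψ hsat.2
  | box φ ih =>
    obtain ⟨t, ht, u, hu⟩ := hI (.box w φ) s hs h
    exact fun hsat ↦ ih ht hu (hsat u)
  | abox i φ ih =>
    obtain ⟨t, ht, u, hwu, hu⟩ := hI (.abox w i φ) s hs h
    exact fun hsat ↦ ih ht hu (hsat u ⟨t, ht, .fwd hwu (.refl u)⟩)
  | obl i φ ih =>
    obtain ⟨t, ht, u, hiu, hu⟩ := hI (.obl w i φ) s hs h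
    exact fun hsat ↦ ih ht hu (hsat u fun _ ↦ ⟨t, ht, u, hiu, .refl u⟩)
  | dia φ ih =>
    rintro ⟨v, hsat⟩
    obtain ⟨t, ht, hv⟩ := hI (.dia w v φ) s hs h
    exact ih ht hv hsat
  | adia i φ ih =>
    rintro ⟨v, ⟨t, ht, hwv⟩, hsat⟩
    obtain ⟨r, hr, hsr, htr⟩ := I.directed s hs t ht
    obtain ⟨q, hq, hv⟩ := hI (.adia w v i φ) r hr ⟨hsr.2.2 h, hwv.mono htr.1⟩
    exact ih hq hv hsat
  | per i φ ih =>
    rintro ⟨v, hideal, hsat⟩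
    obtain ⟨t, ht, u, hu, huv⟩ := hideal (hI (.perDeon w i φ) s hs h)
    obtain ⟨r, hr, hsr, htr⟩ := I.directed s hs t ht
    obtain ⟨q, hq, hv⟩ := hI (.per w v i φ) r hr ⟨hsr.2.2 h, u, htr.2.1 hu, huv.mono htr.1⟩
    exact ih hq hv hsat

theorem refutes_limitModel (hI : IsGeneric I) {s : Underivable n k} (hs : s ∈ I) :
    (limitModel hI).Refutes id s.1.rel s.1.deon s.1.fml :=
  ⟨fun _ ha ↦ ⟨s, hs, .fwd ha (.refl _)⟩, fun _ hb _ ↦ ⟨s, hs, _, hb, .refl _⟩,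
    fun _ hc ↦ not_sat_limitModel hI hs (.mem hc)⟩

theorem exists_refutes_of_not_dsl {RA : RAt n} {IA : DAt n} {Γ : SSeq n}
    (h : ¬ DSL n k RA IA Γ) : ∃ (M : Model n k ℕ) (σ : ℕ → ℕ), M.Refutes σ RA IA Γ := by
  obtain ⟨I, hmem, hI⟩ := exists_isGeneric (⟨⟨RA, IA, Γ⟩, h⟩ : Underivable n k)
  exact ⟨limitModel hI, id, refutes_limitModel hI hmem⟩

end Completeness

theorem str_admissible_in_dsl_general {n k : ℕ} {gR gG gS : Prop} {RA : RAt n} {IA : DAt n}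
    {Γ : SSeq n} (h : SDer n k gR gG gS RA IA Γ) : DSL n k RA IA Γ := by
  by_contra hΓ
  obtain ⟨M, σ, hM⟩ := exists_refutes_of_not_dsl hΓ
  exact h.not_refutes M σ hM

/-- For all `n, k ∈ ℕ`, the rules of `Str(DS)` — label
substitution, weakening, contraction of relational, deontic atoms and of
labelled formulae, and cut — are admissible in `DS_n^k L`: every labelled
sequent derivable in `DS_n^k L + Str(DS)` is derivable in `DS_n^k L`. -/
theorem str_admissible_in_dsl (n k : ℕ) (RA : RAt n) (IA : DAt n) (Γ : SSeq n)
    (h : DSLStr n k RA IA Γ) : DSL n k RA IA Γ :=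
  str_admissible_in_dsl_general h

end DeonticStit
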